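/- There exist constants C > 0 and λ₀ > 0, depending only on α and β, such that for every real Dirichlet quasimode datum (u, λ, f) on the stadium S with λ ≥ λ₀, one has ∫_{∂S} |∂_N u|² dl ≤ C ( λ² ‖u‖²_{L²(S)} + ‖f‖²_{L²(S)} ). -/

import Mathlib

open MeasureTheory Real Set Filter

noncomputable section

/-- Partial derivative in the first (x) variable. -/
def pdx (u : ℝ × ℝ → ℝ) (p : ℝ × ℝ) : ℝ := deriv (fun t => u (t, p.2)) p.1

/-- Partial derivative in the second (y) variable. -/
def pdy (u : ℝ × ℝ → ℝ) (p : ℝ × ℝ) : ℝ := deriv (fun t => u (p.1, t)) p.2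

/-- The positive Laplacian `Δu = -u_xx - u_yy`. -/
def lap (u : ℝ × ℝ → ℝ) (p : ℝ × ℝ) : ℝ := -(pdx (pdx u) p) - (pdy (pdy u) p)

/-- The central rectangle `R = [-α,α] × [-β,β]`. -/
def Rect (α β : ℝ) : Set (ℝ × ℝ) := Icc (-α) α ×ˢ Icc (-β) β

/-- The wings `W = W₊ ∪ W₋`, two half-discs of radius β centered at `(±α, 0)`. -/
def Wings (α β : ℝ) : Set (ℝ × ℝ) :=
  {p | (p.1 - α) ^ 2 + p.2 ^ 2 ≤ β ^ 2 ∧ α ≤ p.1} ∪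
  {p | (p.1 + α) ^ 2 + p.2 ^ 2 ≤ β ^ 2 ∧ p.1 ≤ -α}

/-- The Bunimovich stadium `S = R ∪ W`. -/
def Stadium (α β : ℝ) : Set (ℝ × ℝ) := Rect α β ∪ Wings α β

/-- The boundary `∂S`: two horizontal segments and two semicircles. -/
def StadiumBoundary (α β : ℝ) : Set (ℝ × ℝ) :=
  {p | |p.1| ≤ α ∧ (p.2 = β ∨ p.2 = -β)} ∪
  {p | (|p.1| - α) ^ 2 + p.2 ^ 2 = β ^ 2 ∧ α ≤ |p.1|}

/-- Boundary integral `∫_{∂S} g dl` of an integrand `g` depending on the boundary point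
and the outward unit normal at that point. -/
def bdryInt (α β : ℝ) (g : ℝ × ℝ → ℝ × ℝ → ℝ) : ℝ :=
  (∫ x in (-α)..α, (g (x, β) (0, 1) + g (x, -β) (0, -1))) +
  β * ∫ θ in (-(π / 2))..(π / 2),
    (g (α + β * cos θ, β * sin θ) (cos θ, sin θ) +
     g (-(α + β * cos θ), β * sin θ) (-cos θ, sin θ))

/-- Boundary integral `∫_{∂S ∩ W} g dl` over the two semicircles only. -/
def bdryIntW (α β : ℝ) (g : ℝ × ℝ → ℝ × ℝ → ℝ) : ℝ :=
  β * ∫ θ in (-(π / 2))..(π / 2),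
    (g (α + β * cos θ, β * sin θ) (cos θ, sin θ) +
     g (-(α + β * cos θ), β * sin θ) (-cos θ, sin θ))

/-- The normal derivative `∂_N u = n₁ ∂_x u + n₂ ∂_y u` at a boundary point `p`
with outward unit normal `n`. -/
def nderiv (u : ℝ × ℝ → ℝ) (p n : ℝ × ℝ) : ℝ := n.1 * pdx u p + n.2 * pdy u p

/-- A real Dirichlet quasimode datum `(u, λ, f)` on the stadium: `λ > 0`, `u` smooth on a
neighborhood of `S`, `u = 0` on `∂S`, and `(Δ - λ²) u = f` on `S`. -/
structure QMDatum (α β : ℝ) where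
  u : ℝ × ℝ → ℝ
  lam : ℝ
  f : ℝ × ℝ → ℝ
  lam_pos : 0 < lam
  smooth : ∃ V : Set (ℝ × ℝ), IsOpen V ∧ Stadium α β ⊆ V ∧ ContDiffOn ℝ (⊤ : ℕ∞) u V
  dirichlet : ∀ p ∈ StadiumBoundary α β, u p = 0
  eqn : ∀ p ∈ Stadium α β, lap u p - lam ^ 2 * u p = f p

/-! The proof is Rellich's. Pairing `Δu` with the dilation derivative `X u = x ∂ₓu + y ∂_y u` and
applying the divergence theorem to `(X u) ∇u - |∇u|² (x, y) / 2` produces the boundary term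
`∫_{∂S} ((x, y) · n) |∂_N u|²`, since `∇u = (∂_N u) n` on `∂S` by the Dirichlet condition. The
stadium is uniformly star-shaped about its center: `(x, y) · n ≥ β`. The remaining interior terms
are bounded by `λ² ‖u‖²`, `‖f‖²` and `‖∇u‖²`. The identity `∫ u (X u) = -‖u‖²` yields the Poincaré
inequality `‖u‖ ≤ (α + β) ‖∇u‖`, and with it the energy identity `‖∇u‖² = λ² ‖u‖² + ∫ f u` gives
`‖∇u‖² ≤ 2 λ² ‖u‖² + (α + β)² ‖f‖²`. -/

section Calculus

lemma exists_contDiff_eventuallyEq {E F : Type*} [NormedAddCommGroup E] [NormedSpace ℝ E]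
    [FiniteDimensional ℝ E] [NormedAddCommGroup F] [NormedSpace ℝ F] {n : ℕ∞} {K V : Set E}
    {u : E → F} (hK : IsClosed K) (hV : IsOpen V) (hKV : K ⊆ V) (hu : ContDiffOn ℝ n u V) :
    ∃ v : E → F, ContDiff ℝ n v ∧ ∀ p ∈ K, u =ᶠ[nhds p] v := by
  obtain ⟨χ, hχ0, hχ1, -⟩ := exists_contMDiffMap_zero_one_nhds_of_isClosed (n := n)
    (modelWithCornersSelf ℝ E) hV.isClosed_compl hK (disjoint_compl_left_iff_subset.2 hKV)
  rw [eventually_nhdsSet_iff_forall] at hχ0 hχ1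
  refine ⟨fun p => χ p • u p, contDiff_iff_contDiffAt.2 fun p => ?_, fun p hp => ?_⟩
  · by_cases hp : p ∈ V
    · exact χ.contMDiff.contDiff.contDiffAt.smul (hu.contDiffAt (hV.mem_nhds hp))
    · refine (contDiffAt_const (c := (0 : F))).congr_of_eventuallyEq ?_
      filter_upwards [hχ0 p hp] with q hq
      rw [hq, zero_smul]
  · filter_upwards [hχ1 p hp] with q hq
    rw [hq, one_smul]

variable {u v : ℝ × ℝ → ℝ} {p : ℝ × ℝ}

lemma pdx_congr (h : u =ᶠ[nhds p] v) : pdx u =ᶠ[nhds p] pdx v := by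
  filter_upwards [h.eventuallyEq_nhds] with q hq
  have htendsto : Tendsto (fun t : ℝ => (t, q.2)) (nhds q.1) (nhds q) :=
    Continuous.tendsto' (by fun_prop) _ _ rfl
  exact (hq.comp_tendsto htendsto).deriv_eq

lemma pdy_congr (h : u =ᶠ[nhds p] v) : pdy u =ᶠ[nhds p] pdy v := by
  filter_upwards [h.eventuallyEq_nhds] with q hq
  have htendsto : Tendsto (fun t : ℝ => (q.1, t)) (nhds q.2) (nhds q) :=
    Continuous.tendsto' (by fun_prop) _ _ rfl
  exact (hq.comp_tendsto htendsto).deriv_eq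

lemma lap_congr (h : u =ᶠ[nhds p] v) : lap u p = lap v p := by
  rw [lap, lap, (pdx_congr (pdx_congr h)).eq_of_nhds, (pdy_congr (pdy_congr h)).eq_of_nhds]

lemma nderiv_congr (h : u =ᶠ[nhds p] v) (n : ℝ × ℝ) : nderiv u p n = nderiv v p n := by
  rw [nderiv, nderiv, (pdx_congr h).eq_of_nhds, (pdy_congr h).eq_of_nhds]

lemma pdx_eq_fderiv (hu : DifferentiableAt ℝ u p) : pdx u p = fderiv ℝ u p (1, 0) :=
  (hu.hasFDerivAt.comp_hasDerivAt (f := fun t : ℝ => (t, p.2)) p.1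
    ((hasDerivAt_id p.1).prodMk (hasDerivAt_const p.1 p.2))).deriv

lemma pdy_eq_fderiv (hu : DifferentiableAt ℝ u p) : pdy u p = fderiv ℝ u p (0, 1) :=
  (hu.hasFDerivAt.comp_hasDerivAt (f := fun t : ℝ => (p.1, t)) p.2
    ((hasDerivAt_const p.2 p.1).prodMk (hasDerivAt_id p.2))).deriv

lemma hasDerivAt_comp_curve {γ δ : ℝ → ℝ} {γ' δ' t : ℝ} (hu : DifferentiableAt ℝ u (γ t, δ t))
    (hγ : HasDerivAt γ γ' t) (hδ : HasDerivAt δ δ' t) :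
    HasDerivAt (fun s => u (γ s, δ s)) (γ' * pdx u (γ t, δ t) + δ' * pdy u (γ t, δ t)) t := by
  have hvec : ((γ', δ') : ℝ × ℝ) = γ' • (1, 0) + δ' • (0, 1) := by simp
  have hchain := hu.hasFDerivAt.comp_hasDerivAt (f := fun s : ℝ => (γ s, δ s)) t (hγ.prodMk hδ)
  rwa [hvec, map_add, map_smul, map_smul, ← pdx_eq_fderiv hu, ← pdy_eq_fderiv hu] at hchain

lemma hasDerivAt_pdx (hu : Differentiable ℝ u) (x y : ℝ) :
    HasDerivAt (fun t => u (t, y)) (pdx u (x, y)) x := by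
  simpa using hasDerivAt_comp_curve (hu (x, y)) (hasDerivAt_id' x) (hasDerivAt_const x y)

lemma hasDerivAt_pdy (hu : Differentiable ℝ u) (x y : ℝ) :
    HasDerivAt (fun t => u (x, t)) (pdy u (x, y)) y := by
  simpa using hasDerivAt_comp_curve (hu (x, y)) (hasDerivAt_const y x) (hasDerivAt_id' y)

lemma contDiff_pdx {m n : WithTop ℕ∞} (hu : ContDiff ℝ n u) (hmn : m + 1 ≤ n) :
    ContDiff ℝ m (pdx u) := by
  have hdiff : Differentiable ℝ u :=
    (hu.of_le (le_add_self.trans hmn)).differentiable one_ne_zero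
  rw [show pdx u = _ from funext fun p => pdx_eq_fderiv (hdiff p)]
  exact (hu.fderiv_right hmn).clm_apply contDiff_const

lemma contDiff_pdy {m n : WithTop ℕ∞} (hu : ContDiff ℝ n u) (hmn : m + 1 ≤ n) :
    ContDiff ℝ m (pdy u) := by
  have hdiff : Differentiable ℝ u :=
    (hu.of_le (le_add_self.trans hmn)).differentiable one_ne_zero
  rw [show pdy u = _ from funext fun p => pdy_eq_fderiv (hdiff p)]
  exact (hu.fderiv_right hmn).clm_apply contDiff_const

lemma continuous_pdx (hu : ContDiff ℝ 1 u) : Continuous (pdx u) :=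
  (contDiff_pdx (m := 0) hu (by norm_num)).continuous

lemma continuous_pdy (hu : ContDiff ℝ 1 u) : Continuous (pdy u) :=
  (contDiff_pdy (m := 0) hu (by norm_num)).continuous

lemma pdy_pdx_comm (hu : ContDiff ℝ 2 u) : pdy (pdx u) = pdx (pdy u) := by
  have hdiff : Differentiable ℝ u := hu.differentiable two_ne_zero
  have hdiff2 : Differentiable ℝ (fderiv ℝ u) :=
    (hu.fderiv_right (m := 1) (by norm_num)).differentiable one_ne_zero
  ext p
  have hsymm : IsSymmSndFDerivAt ℝ u p := hu.contDiffAt.isSymmSndFDerivAt (by simp)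
  rw [show pdx u = _ from funext fun q => pdx_eq_fderiv (hdiff q),
    show pdy u = _ from funext fun q => pdy_eq_fderiv (hdiff q),
    pdy_eq_fderiv (by fun_prop), pdx_eq_fderiv (by fun_prop),
    fderiv_clm_apply (hdiff2 p) (by fun_prop), fderiv_clm_apply (hdiff2 p) (by fun_prop)]
  simpa using hsymm (0, 1) (1, 0)

end Calculus

section PlaneIntegrals

variable {E : Type*} [NormedAddCommGroup E] [NormedSpace ℝ E]

lemma setIntegral_eq_integral_integral {a b : ℝ} (hab : a ≤ b) {g h : ℝ → ℝ}
    (hgh : ∀ x ∈ Icc a b, g x ≤ h x) {S : Set (ℝ × ℝ)} (hS : MeasurableSet S)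
    (hmem : ∀ x y, (x, y) ∈ S ↔ x ∈ Icc a b ∧ y ∈ Icc (g x) (h x)) {f : ℝ × ℝ → E}
    (hf : IntegrableOn f S) :
    ∫ p in S, f p = ∫ x in a..b, ∫ y in g x..h x, f (x, y) := by
  have hslice (x : ℝ) : ∫ y, S.indicator f (x, y) =
      (Icc a b).indicator (fun x => ∫ y in g x..h x, f (x, y)) x := by
    classical
    by_cases hx : x ∈ Icc a b
    · rw [indicator_of_mem hx, intervalIntegral.integral_of_le (hgh x hx),
        ← integral_Icc_eq_integral_Ioc, ← integral_indicator measurableSet_Icc]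
      refine integral_congr_ae (.of_forall fun y => ?_)
      simp only [indicator_apply, hmem, hx, true_and]
    · simp only [indicator_apply, hmem, hx, false_and, if_false, integral_zero]
  rw [← integral_indicator hS, Measure.volume_eq_prod,
    integral_prod _ (hf.integrable_indicator hS)]
  simp_rw [hslice]
  rw [integral_indicator measurableSet_Icc, integral_Icc_eq_integral_Ioc,
    intervalIntegral.integral_of_le hab]

lemma setIntegral_swap (S : Set (ℝ × ℝ)) (f : ℝ × ℝ → E) :
    ∫ p in Prod.swap ⁻¹' S, f p.swap = ∫ p in S, f p :=
  (Measure.measurePreserving_swap (μ := volume) (ν := volume)).setIntegral_preimage_emb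
    MeasurableEquiv.prodComm.measurableEmbedding f S

lemma integral_neg_self_eq {b : ℝ} {f : ℝ → E} (hf : Continuous f) :
    ∫ x in (-b)..b, f x = ∫ x in (0 : ℝ)..b, (f x + f (-x)) := by
  have hneg : ∫ x in (0 : ℝ)..b, f (-x) = ∫ x in (-b)..0, f x := by
    rw [intervalIntegral.integral_comp_neg, neg_zero]
  rw [intervalIntegral.integral_add (hf.intervalIntegrable _ _)
      (Continuous.intervalIntegrable (by fun_prop) _ _), hneg, add_comm,
    intervalIntegral.integral_add_adjacent_intervals (hf.intervalIntegrable _ _)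
      (hf.intervalIntegrable _ _)]

lemma integral_comp_sqrt_sq_sub_sq {r a b : ℝ} (hr : 0 ≤ r) (ha : -(π / 2) ≤ a) (hab : a ≤ b)
    (hb : b ≤ π / 2) {g : ℝ × ℝ → ℝ} (hg : Continuous g) :
    ∫ y in (r * sin a)..(r * sin b), g (√(r ^ 2 - y ^ 2), y) =
      r * ∫ θ in a..b, cos θ * g (r * cos θ, r * sin θ) := by
  rw [← intervalIntegral.integral_comp_mul_deriv (f' := fun θ => r * cos θ)
      (g := fun y => g (√(r ^ 2 - y ^ 2), y)) (fun θ _ => (hasDerivAt_sin θ).const_mul r)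
      (by fun_prop) (by fun_prop), ← intervalIntegral.integral_const_mul]
  refine intervalIntegral.integral_congr fun θ hθ => ?_
  rw [uIcc_of_le hab] at hθ
  have hcos : 0 ≤ r * cos θ :=
    mul_nonneg hr (cos_nonneg_of_mem_Icc ⟨ha.trans hθ.1, hθ.2.trans hb⟩)
  have hsqrt : √(r ^ 2 - (r * sin θ) ^ 2) = r * cos θ := by
    rw [← sqrt_sq hcos, mul_pow, mul_pow, cos_sq', mul_sub, mul_one]
  simp only [Function.comp_apply, hsqrt]
  ring

lemma integral_chord_eq_integral_arc {r : ℝ} (hr : 0 ≤ r) {g : ℝ × ℝ → ℝ} (hg : Continuous g) :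
    ∫ x in (0 : ℝ)..r, (g (x, √(r ^ 2 - x ^ 2)) - g (x, -√(r ^ 2 - x ^ 2))) =
      r * ∫ θ in (-(π / 2))..(π / 2), sin θ * g (r * cos θ, r * sin θ) := by
  have hsub := integral_comp_sqrt_sq_sub_sq hr (by linarith [pi_pos]) pi_div_two_pos.le le_rfl
    (g := fun q => g (q.2, q.1) - g (q.2, -q.1)) (by fun_prop)
  have hreflect := intervalIntegral.integral_comp_sub_left (a := 0) (b := π / 2)
    (fun θ => cos θ * (g (r * sin θ, r * cos θ) - g (r * sin θ, -(r * cos θ)))) (π / 2)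
  simp only [sin_zero, mul_zero, sin_pi_div_two, mul_one] at hsub
  simp only [cos_pi_div_two_sub, sin_pi_div_two_sub, sub_self, sub_zero] at hreflect
  rw [hsub, ← hreflect, integral_neg_self_eq (by fun_prop)]
  congr! 3 with θ
  rw [sin_neg, cos_neg, mul_neg]
  ring

end PlaneIntegrals

section StadiumGeometry

variable {α β : ℝ}

lemma mem_stadium_iff (hα : 0 ≤ α) (hβ : 0 ≤ β) {p : ℝ × ℝ} :
    p ∈ Stadium α β ↔ max (|p.1| - α) 0 ^ 2 + p.2 ^ 2 ≤ β ^ 2 := by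
  obtain ⟨x, y⟩ := p
  have hy : y ∈ Icc (-β) β ↔ y ^ 2 ≤ β ^ 2 := by rw [mem_Icc, ← abs_le, sq_le_sq, abs_of_nonneg hβ]
  simp only [Stadium, Rect, Wings, mem_union, mem_prod, hy, mem_ofPred_eq, mem_Icc]
  rcases le_total |x| α with hx | hx
  · rw [max_eq_right (by linarith)]
    have hx' := abs_le.1 hx
    constructor
    · rintro (⟨-, h⟩ | ⟨h, -⟩ | ⟨h, -⟩) <;> nlinarith
    · exact fun h => Or.inl ⟨hx', by linarith⟩
  · rw [max_eq_left (by linarith)]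
    constructor
    · rintro (⟨h, hle⟩ | ⟨h, hle⟩ | ⟨h, hle⟩)
      · rw [le_antisymm (abs_le.2 h) hx]; linarith
      · rwa [abs_of_nonneg (hα.trans hle)]
      · rw [abs_of_nonpos (by linarith)]; linarith
    · intro h
      rcases abs_cases x with ⟨hxabs, -⟩ | ⟨hxabs, -⟩ <;> rw [hxabs] at h hx
      · exact Or.inr (Or.inl ⟨h, hx⟩)
      · exact Or.inr (Or.inr ⟨by linarith, by linarith⟩)

lemma mem_stadium_iff_fst_mem (hα : 0 ≤ α) (hβ : 0 ≤ β) (x y : ℝ) :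
    (x, y) ∈ Stadium α β ↔ y ∈ Icc (-β) β ∧
      x ∈ Icc (-(α + √(β ^ 2 - y ^ 2))) (α + √(β ^ 2 - y ^ 2)) := by
  rw [mem_stadium_iff hα hβ, mem_Icc, mem_Icc, ← abs_le, ← abs_le]
  have hsqrt (hy : y ^ 2 ≤ β ^ 2) :
      |x| ≤ α + √(β ^ 2 - y ^ 2) ↔ max (|x| - α) 0 ^ 2 ≤ β ^ 2 - y ^ 2 := by
    rw [← le_sqrt (le_max_right _ _) (sub_nonneg.2 hy), max_le_iff, sub_le_iff_le_add',
      and_iff_left (sqrt_nonneg _)]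
  constructor
  · intro h
    have hy : y ^ 2 ≤ β ^ 2 := by nlinarith [sq_nonneg (max (|x| - α) 0)]
    exact ⟨abs_le_of_sq_le_sq hy hβ, (hsqrt hy).2 (by linarith)⟩
  · rintro ⟨hy, hx⟩
    have := (hsqrt (sq_le_sq' (abs_le.1 hy).1 (abs_le.1 hy).2)).1 hx
    linarith

lemma mem_stadium_iff_snd_mem (hα : 0 ≤ α) (hβ : 0 ≤ β) (x y : ℝ) :
    (x, y) ∈ Stadium α β ↔ x ∈ Icc (-(α + β)) (α + β) ∧
      y ∈ Icc (-√(β ^ 2 - max (|x| - α) 0 ^ 2)) (√(β ^ 2 - max (|x| - α) 0 ^ 2)) := by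
  rw [mem_stadium_iff hα hβ, mem_Icc, mem_Icc, ← abs_le, ← abs_le]
  have hmax : |x| ≤ α + β ↔ max (|x| - α) 0 ^ 2 ≤ β ^ 2 := by
    rw [sq_le_sq₀ (le_max_right _ _) hβ, max_le_iff, sub_le_iff_le_add', and_iff_left hβ]
  constructor
  · intro h
    exact ⟨hmax.2 (by nlinarith [sq_nonneg y]), abs_le_sqrt (by linarith)⟩
  · rintro ⟨hx, hy⟩
    have := (le_sqrt (abs_nonneg y) (sub_nonneg.2 (hmax.1 hx))).1 hy
    rw [sq_abs] at this
    linarith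

lemma sq_add_sq_le_of_mem_stadium (hα : 0 ≤ α) (hβ : 0 ≤ β) {p : ℝ × ℝ} (hp : p ∈ Stadium α β) :
    p.1 ^ 2 + p.2 ^ 2 ≤ (α + β) ^ 2 := by
  obtain ⟨hx, -⟩ := (mem_stadium_iff_snd_mem hα hβ p.1 p.2).1 hp
  have hdist := (mem_stadium_iff hα hβ).1 hp
  have hx' : |p.1| ≤ α + β := abs_le.2 hx
  rw [← sq_abs p.1]
  rcases le_total |p.1| α with h | h
  · rw [max_eq_right (by linarith)] at hdist
    nlinarith [abs_nonneg p.1]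
  · rw [max_eq_left (by linarith)] at hdist
    nlinarith

lemma isClosed_stadium (hα : 0 ≤ α) (hβ : 0 ≤ β) : IsClosed (Stadium α β) := by
  rw [Set.ext fun p => mem_stadium_iff hα hβ (p := p)]
  exact isClosed_le (f := fun p : ℝ × ℝ => max (|p.1| - α) 0 ^ 2 + p.2 ^ 2) (by fun_prop)
    continuous_const

lemma isCompact_stadium (hα : 0 ≤ α) (hβ : 0 ≤ β) : IsCompact (Stadium α β) := by
  refine (isCompact_Icc (a := ((-(α + β), -β) : ℝ × ℝ)) (b := (α + β, β))).of_isClosed_subset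
    (isClosed_stadium hα hβ) fun p hp => ?_
  have hx := ((mem_stadium_iff_snd_mem hα hβ p.1 p.2).1 hp).1
  have hy := ((mem_stadium_iff_fst_mem hα hβ p.1 p.2).1 hp).1
  exact ⟨⟨hx.1, hy.1⟩, ⟨hx.2, hy.2⟩⟩

lemma stadiumBoundary_subset_stadium (hα : 0 ≤ α) (hβ : 0 ≤ β) :
    StadiumBoundary α β ⊆ Stadium α β := by
  intro p hp
  rw [mem_stadium_iff hα hβ]
  rcases hp with ⟨hx, hy | hy⟩ | ⟨hcircle, hx⟩
  · rw [max_eq_right (by linarith), hy]; linarith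
  · rw [max_eq_right (by linarith), hy]; linarith
  · rw [max_eq_left (by linarith), hcircle]

lemma integrableOn_stadium (hα : 0 ≤ α) (hβ : 0 ≤ β) {f : ℝ × ℝ → ℝ} (hf : Continuous f) :
    IntegrableOn f (Stadium α β) :=
  hf.continuousOn.integrableOn_compact (isCompact_stadium hα hβ)

/-- `n` is the outward unit normal of the stadium at `p`, where `p` is a boundary point other than
the four junctions of a segment with an arc. Junctions are excluded so that the boundary is a
regular curve on both sides of `p`; they do not contribute to boundary integrals. The sign `s`
selects the upper or lower segment, respectively the right or left arc. -/
inductive OutwardNormal (α β : ℝ) : ℝ × ℝ → ℝ × ℝ → Prop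
  | segment {x s : ℝ} (hx : x ∈ Ioo (-α) α) (hs : s = 1 ∨ s = -1) :
      OutwardNormal α β (x, s * β) (0, s)
  | arc {θ s : ℝ} (hθ : θ ∈ Ioo (-(π / 2)) (π / 2)) (hs : s = 1 ∨ s = -1) :
      OutwardNormal α β (s * (α + β * cos θ), β * sin θ) (s * cos θ, sin θ)

namespace OutwardNormal

variable {p n : ℝ × ℝ}

lemma top {x : ℝ} (hx : x ∈ Ioo (-α) α) : OutwardNormal α β (x, β) (0, 1) := by
  simpa using segment hx (Or.inl rfl)

lemma bottom {x : ℝ} (hx : x ∈ Ioo (-α) α) : OutwardNormal α β (x, -β) (0, -1) := by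
  simpa using segment hx (Or.inr rfl)

lemma right {θ : ℝ} (hθ : θ ∈ Ioo (-(π / 2)) (π / 2)) :
    OutwardNormal α β (α + β * cos θ, β * sin θ) (cos θ, sin θ) := by
  simpa using arc hθ (Or.inl rfl)

lemma left {θ : ℝ} (hθ : θ ∈ Ioo (-(π / 2)) (π / 2)) :
    OutwardNormal α β (-(α + β * cos θ), β * sin θ) (-cos θ, sin θ) := by
  simpa only [neg_one_mul] using arc (α := α) (β := β) hθ (Or.inr rfl)

lemma sq_add_sq_eq_one (h : OutwardNormal α β p n) : n.1 ^ 2 + n.2 ^ 2 = 1 := by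
  cases h with
  | segment _ hs => rcases hs with rfl | rfl <;> norm_num
  | arc _ hs => rcases hs with rfl | rfl <;> simp

lemma mem_stadiumBoundary (hα : 0 ≤ α) (hβ : 0 ≤ β) (h : OutwardNormal α β p n) :
    p ∈ StadiumBoundary α β := by
  cases h with
  | segment hx hs =>
    refine Or.inl ⟨abs_le.2 ⟨hx.1.le, hx.2.le⟩, ?_⟩
    rcases hs with rfl | rfl <;> simp
  | @arc θ s hθ hs =>
    have hcos : 0 ≤ β * cos θ := mul_nonneg hβ (cos_pos_of_mem_Ioo hθ).le
    have habs : |s * (α + β * cos θ)| = α + β * cos θ := by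
      rw [abs_mul, abs_of_nonneg (add_nonneg hα hcos)]
      rcases hs with rfl | rfl <;> simp
    refine Or.inr ⟨?_, ?_⟩
    · simp only [habs, add_sub_cancel_left]
      linear_combination β ^ 2 * sin_sq_add_cos_sq θ
    · simp only [habs, le_add_iff_nonneg_right, hcos]

lemma le_position_inner (hα : 0 ≤ α) (h : OutwardNormal α β p n) :
    β ≤ p.1 * n.1 + p.2 * n.2 := by
  cases h with
  | segment _ hs => rcases hs with rfl | rfl <;> simp
  | @arc θ s hθ hs =>
    have hs2 : s ^ 2 = 1 := by rcases hs with rfl | rfl <;> norm_num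
    calc β ≤ β + α * cos θ := le_add_of_nonneg_right (mul_nonneg hα (cos_pos_of_mem_Ioo hθ).le)
      _ = _ := by
        linear_combination (-(α + β * cos θ) * cos θ) * hs2 - β * sin_sq_add_cos_sq θ

end OutwardNormal

end StadiumGeometry

section BoundaryIntegral

variable {α β : ℝ} {g h : ℝ × ℝ → ℝ × ℝ → ℝ}

lemma bdryInt_congr (hα : 0 ≤ α) (hgh : ∀ p n, OutwardNormal α β p n → g p n = h p n) :
    bdryInt α β g = bdryInt α β h := by
  unfold bdryInt
  congr 1
  · refine intervalIntegral.integral_congr_Ioo_of_le (by linarith) fun x hx => ?_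
    simp only [hgh _ _ (.top hx), hgh _ _ (.bottom hx)]
  · congr 1
    refine intervalIntegral.integral_congr_Ioo_of_le (by linarith [pi_pos]) fun θ hθ => ?_
    simp only [hgh _ _ (.right hθ), hgh _ _ (.left hθ)]

lemma continuous_segment_integrand (hg : Continuous (Function.uncurry g)) (β : ℝ) :
    Continuous fun x => g (x, β) (0, 1) + g (x, -β) (0, -1) :=
  (hg.comp (by fun_prop : Continuous fun x : ℝ => (((x, β) : ℝ × ℝ), ((0, 1) : ℝ × ℝ)))).add
    (hg.comp (by fun_prop : Continuous fun x : ℝ => (((x, -β) : ℝ × ℝ), ((0, -1) : ℝ × ℝ))))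

lemma continuous_arc_integrand (hg : Continuous (Function.uncurry g)) (α β : ℝ) :
    Continuous fun θ => g (α + β * cos θ, β * sin θ) (cos θ, sin θ) +
      g (-(α + β * cos θ), β * sin θ) (-cos θ, sin θ) :=
  (hg.comp (by fun_prop : Continuous fun θ : ℝ =>
      (((α + β * cos θ, β * sin θ) : ℝ × ℝ), ((cos θ, sin θ) : ℝ × ℝ)))).add
    (hg.comp (by fun_prop : Continuous fun θ : ℝ =>
      (((-(α + β * cos θ), β * sin θ) : ℝ × ℝ), ((-cos θ, sin θ) : ℝ × ℝ))))

lemma bdryInt_mono (hα : 0 ≤ α) (hβ : 0 ≤ β) (hg : Continuous (Function.uncurry g))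
    (hh : Continuous (Function.uncurry h)) (hgh : ∀ p n, OutwardNormal α β p n → g p n ≤ h p n) :
    bdryInt α β g ≤ bdryInt α β h := by
  refine add_le_add ?_ (mul_le_mul_of_nonneg_left ?_ hβ)
  · exact intervalIntegral.integral_mono_on_of_le_Ioo (by linarith)
      ((continuous_segment_integrand hg β).intervalIntegrable _ _)
      ((continuous_segment_integrand hh β).intervalIntegrable _ _)
      fun x hx => add_le_add (hgh _ _ (.top hx)) (hgh _ _ (.bottom hx))
  · exact intervalIntegral.integral_mono_on_of_le_Ioo (by linarith [pi_pos])
      ((continuous_arc_integrand hg α β).intervalIntegrable _ _)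
      ((continuous_arc_integrand hh α β).intervalIntegrable _ _)
      fun θ hθ => add_le_add (hgh _ _ (.right hθ)) (hgh _ _ (.left hθ))

lemma bdryInt_add (hg : Continuous (Function.uncurry g)) (hh : Continuous (Function.uncurry h)) :
    bdryInt α β (fun p n => g p n + h p n) = bdryInt α β g + bdryInt α β h := by
  unfold bdryInt
  rw [add_add_add_comm, ← mul_add, ← intervalIntegral.integral_add
      ((continuous_segment_integrand hg β).intervalIntegrable _ _)
      ((continuous_segment_integrand hh β).intervalIntegrable _ _),
    ← intervalIntegral.integral_add
      ((continuous_arc_integrand hg α β).intervalIntegrable _ _)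
      ((continuous_arc_integrand hh α β).intervalIntegrable _ _)]
  congr 2
  · congr with x
    ring
  · congr with θ
    ring

lemma bdryInt_const_mul (c : ℝ) (g : ℝ × ℝ → ℝ × ℝ → ℝ) :
    bdryInt α β (fun p n => c * g p n) = c * bdryInt α β g := by
  simp only [bdryInt, ← mul_add, intervalIntegral.integral_const_mul]
  ring

lemma bdryInt_zero : bdryInt α β (fun _ _ => 0) = 0 := by
  simp [bdryInt]

end BoundaryIntegral

section GaussGreen

variable {α β : ℝ} {P Q u : ℝ × ℝ → ℝ}

theorem integral_pdx_stadium (hα : 0 ≤ α) (hβ : 0 ≤ β) (hP : ContDiff ℝ 1 P) :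
    ∫ p in Stadium α β, pdx P p = bdryInt α β (fun p n => n.1 * P p) := by
  have hP₀ : Continuous P := hP.continuous
  have hPx : Continuous (pdx P) := continuous_pdx hP
  have harc := integral_comp_sqrt_sq_sub_sq hβ le_rfl (by linarith [pi_pos]) le_rfl
    (g := fun q => P (α + q.1, q.2) - P (-(α + q.1), q.2)) (by fun_prop)
  simp only [sin_neg, sin_pi_div_two, mul_neg, mul_one] at harc
  calc ∫ p in Stadium α β, pdx P p
      = ∫ p in Prod.swap ⁻¹' Stadium α β, pdx P p.swap := (setIntegral_swap _ _).symm
    _ = ∫ y in (-β)..β, ∫ x in (-(α + √(β ^ 2 - y ^ 2)))..(α + √(β ^ 2 - y ^ 2)), pdx P (x, y) :=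
        setIntegral_eq_integral_integral (by linarith)
          (fun y _ => neg_le_self (add_nonneg hα (sqrt_nonneg _)))
          ((isClosed_stadium hα hβ).preimage continuous_swap).measurableSet
          (fun y x => mem_stadium_iff_fst_mem hα hβ x y)
          ((hPx.comp continuous_swap).continuousOn.integrableOn_compact
            ((Homeomorph.prodComm ℝ ℝ).isCompact_preimage.2 (isCompact_stadium hα hβ)))
    _ = ∫ y in (-β)..β, (P (α + √(β ^ 2 - y ^ 2), y) - P (-(α + √(β ^ 2 - y ^ 2)), y)) := by
        congr! 2 with y
        exact intervalIntegral.integral_eq_sub_of_hasDerivAt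
          (fun x _ => hasDerivAt_pdx (hP.differentiable one_ne_zero) x y)
          (Continuous.intervalIntegrable (by fun_prop) _ _)
    _ = bdryInt α β (fun p n => n.1 * P p) := by
        rw [harc, bdryInt]
        simp only [zero_mul, add_zero, intervalIntegral.integral_zero, zero_add]
        congr! 3 with θ
        ring

lemma integral_vertical_increment (hα : 0 ≤ α) (hβ : 0 ≤ β) (hQ : Continuous Q) :
    ∫ x in (-(α + β))..(α + β), (Q (x, √(β ^ 2 - max (|x| - α) 0 ^ 2)) -
      Q (x, -√(β ^ 2 - max (|x| - α) 0 ^ 2))) = bdryInt α β (fun p n => n.2 * Q p) := by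
  set D : ℝ → ℝ := fun x => Q (x, √(β ^ 2 - max (|x| - α) 0 ^ 2)) -
    Q (x, -√(β ^ 2 - max (|x| - α) 0 ^ 2)) with hD
  have hDc : Continuous D := by fun_prop
  have hsymm : Continuous fun x => D x + D (-x) := by fun_prop
  have hsegments : ∫ x in (0 : ℝ)..α, (D x + D (-x)) =
      ∫ x in (-α)..α, (Q (x, β) - Q (x, -β)) := by
    rw [← integral_neg_self_eq hDc]
    refine intervalIntegral.integral_congr fun x hx => ?_
    rw [uIcc_of_le (by linarith)] at hx
    simp only [hD, max_eq_right (sub_nonpos.2 (abs_le.2 hx)), zero_pow two_ne_zero, sub_zero,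
      sqrt_sq hβ]
  have harcs : ∫ x in α..(α + β), (D x + D (-x)) = β * ∫ θ in (-(π / 2))..(π / 2),
      sin θ * (Q (α + β * cos θ, β * sin θ) + Q (-(α + β * cos θ), β * sin θ)) := by
    rw [← integral_chord_eq_integral_arc hβ
      (g := fun q => Q (α + q.1, q.2) + Q (-(α + q.1), q.2)) (by fun_prop)]
    have hshift := intervalIntegral.integral_comp_add_left (a := 0) (b := β)
      (fun x => D x + D (-x)) α
    rw [add_zero] at hshift
    rw [← hshift]
    refine intervalIntegral.integral_congr fun t ht => ?_
    rw [uIcc_of_le hβ] at ht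
    simp only [hD, abs_neg, abs_of_nonneg (add_nonneg hα ht.1), add_sub_cancel_left,
      max_eq_left ht.1]
    ring
  rw [integral_neg_self_eq hDc, ← intervalIntegral.integral_add_adjacent_intervals
    (hsymm.intervalIntegrable 0 α) (hsymm.intervalIntegrable _ _), hsegments, harcs, bdryInt]
  simp only [one_mul, neg_one_mul, ← sub_eq_add_neg, mul_add]

theorem integral_pdy_stadium (hα : 0 ≤ α) (hβ : 0 ≤ β) (hQ : ContDiff ℝ 1 Q) :
    ∫ p in Stadium α β, pdy Q p = bdryInt α β (fun p n => n.2 * Q p) := by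
  have hQy : Continuous (pdy Q) := continuous_pdy hQ
  rw [setIntegral_eq_integral_integral (by linarith) (fun x _ => neg_le_self (sqrt_nonneg _))
      (isClosed_stadium hα hβ).measurableSet (mem_stadium_iff_snd_mem hα hβ)
      (integrableOn_stadium hα hβ hQy),
    ← integral_vertical_increment hα hβ hQ.continuous]
  congr! 2 with x
  exact intervalIntegral.integral_eq_sub_of_hasDerivAt
    (fun y _ => hasDerivAt_pdy (hQ.differentiable one_ne_zero) x y)
    (Continuous.intervalIntegrable (by fun_prop) _ _)

theorem integral_div_stadium (hα : 0 ≤ α) (hβ : 0 ≤ β) (hP : ContDiff ℝ 1 P)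
    (hQ : ContDiff ℝ 1 Q) :
    ∫ p in Stadium α β, (pdx P p + pdy Q p) =
      bdryInt α β (fun p n => n.1 * P p + n.2 * Q p) := by
  have hPx : Continuous (pdx P) := continuous_pdx hP
  have hQy : Continuous (pdy Q) := continuous_pdy hQ
  rw [integral_add (integrableOn_stadium hα hβ hPx) (integrableOn_stadium hα hβ hQy),
    integral_pdx_stadium hα hβ hP, integral_pdy_stadium hα hβ hQ,
    bdryInt_add (by unfold Function.uncurry; fun_prop) (by unfold Function.uncurry; fun_prop)]

lemma integral_div_stadium_eq_zero (hα : 0 ≤ α) (hβ : 0 ≤ β) (hP : ContDiff ℝ 1 P)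
    (hQ : ContDiff ℝ 1 Q) (hP₀ : ∀ p ∈ StadiumBoundary α β, P p = 0)
    (hQ₀ : ∀ p ∈ StadiumBoundary α β, Q p = 0) :
    ∫ p in Stadium α β, (pdx P p + pdy Q p) = 0 := by
  rw [integral_div_stadium hα hβ hP hQ, ← bdryInt_zero (α := α) (β := β)]
  refine bdryInt_congr hα fun p n hpn => ?_
  have hp := hpn.mem_stadiumBoundary hα hβ
  rw [hP₀ p hp, hQ₀ p hp, mul_zero, mul_zero, add_zero]

end GaussGreen

section RellichIdentities

/-- The dilation derivative `x ∂ₓu + y ∂_y u`, the multiplier in Rellich's identity. -/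
def dilationDeriv (u : ℝ × ℝ → ℝ) (p : ℝ × ℝ) : ℝ := p.1 * pdx u p + p.2 * pdy u p

/-- The squared gradient `|∇u|²`, the energy density of `u`. -/
def gradSq (u : ℝ × ℝ → ℝ) (p : ℝ × ℝ) : ℝ := pdx u p ^ 2 + pdy u p ^ 2

variable {α β : ℝ} {u : ℝ × ℝ → ℝ} {p n : ℝ × ℝ}

lemma dilationDeriv_sq_le (u : ℝ × ℝ → ℝ) (p : ℝ × ℝ) :
    dilationDeriv u p ^ 2 ≤ (p.1 ^ 2 + p.2 ^ 2) * gradSq u p := by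
  rw [dilationDeriv, gradSq]
  linarith [sq_nonneg (p.1 * pdy u p - p.2 * pdx u p)]

lemma continuous_dilationDeriv (hu : ContDiff ℝ 1 u) : Continuous (dilationDeriv u) := by
  have hx : Continuous (pdx u) := continuous_pdx hu
  have hy : Continuous (pdy u) := continuous_pdy hu
  unfold dilationDeriv
  fun_prop

lemma continuous_gradSq (hu : ContDiff ℝ 1 u) : Continuous (gradSq u) := by
  have hx : Continuous (pdx u) := continuous_pdx hu
  have hy : Continuous (pdy u) := continuous_pdy hu
  unfold gradSq
  fun_prop

lemma continuous_lap (hu : ContDiff ℝ 2 u) : Continuous (lap u) := by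
  have hx : ContDiff ℝ 1 (pdx u) := contDiff_pdx hu (by norm_num)
  have hy : ContDiff ℝ 1 (pdy u) := contDiff_pdy hu (by norm_num)
  have hxx : Continuous (pdx (pdx u)) := continuous_pdx hx
  have hyy : Continuous (pdy (pdy u)) := continuous_pdy hy
  unfold lap
  fun_prop

lemma continuous_nderiv (hu : ContDiff ℝ 1 u) : Continuous (Function.uncurry (nderiv u)) := by
  have hx : Continuous (pdx u) := continuous_pdx hu
  have hy : Continuous (pdy u) := continuous_pdy hu
  unfold Function.uncurry nderiv
  fun_prop

lemma tangential_deriv_eq_zero (hα : 0 ≤ α) (hβ : 0 < β) (hu : Differentiable ℝ u)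
    (hu₀ : ∀ p ∈ StadiumBoundary α β, u p = 0) (hpn : OutwardNormal α β p n) :
    n.1 * pdy u p = n.2 * pdx u p := by
  cases hpn with
  | @segment x s hx hs =>
    have hderiv := hasDerivAt_comp_curve (hu (x, s * β)) (hasDerivAt_id' x)
      (hasDerivAt_const x (s * β))
    have hzero : (fun t => u (t, s * β)) =ᶠ[nhds x] fun _ => 0 := by
      filter_upwards [isOpen_Ioo.mem_nhds hx] with t ht
      exact hu₀ _ ((OutwardNormal.segment ht hs).mem_stadiumBoundary hα hβ.le)
    have := hderiv.unique ((hasDerivAt_const x 0).congr_of_eventuallyEq hzero)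
    linear_combination (-s) * this
  | @arc θ s hθ hs =>
    have hderiv := hasDerivAt_comp_curve (hu (s * (α + β * cos θ), β * sin θ))
      ((((hasDerivAt_cos θ).const_mul β).const_add α).const_mul s)
      ((hasDerivAt_sin θ).const_mul β)
    have hzero : (fun t => u (s * (α + β * cos t), β * sin t)) =ᶠ[nhds θ] fun _ => 0 := by
      filter_upwards [isOpen_Ioo.mem_nhds hθ] with t ht
      exact hu₀ _ ((OutwardNormal.arc ht hs).mem_stadiumBoundary hα hβ.le)
    have htangent := hderiv.unique ((hasDerivAt_const θ 0).congr_of_eventuallyEq hzero)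
    have hs2 : s ^ 2 = 1 := by rcases hs with rfl | rfl <;> norm_num
    refine mul_left_cancel₀ hβ.ne' ?_
    linear_combination s * htangent + β * sin θ * pdx u (s * (α + β * cos θ), β * sin θ) * hs2

lemma grad_eq_nderiv_mul_normal (hα : 0 ≤ α) (hβ : 0 < β) (hu : Differentiable ℝ u)
    (hu₀ : ∀ p ∈ StadiumBoundary α β, u p = 0) (hpn : OutwardNormal α β p n) :
    pdx u p = nderiv u p n * n.1 ∧ pdy u p = nderiv u p n * n.2 := by
  have hnormal := hpn.sq_add_sq_eq_one
  have htangent := tangential_deriv_eq_zero hα hβ hu hu₀ hpn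
  rw [nderiv]
  constructor
  · linear_combination (-pdx u p) * hnormal - n.2 * htangent
  · linear_combination (-pdy u p) * hnormal + n.1 * htangent

lemma integral_gradSq_eq_integral_mul_lap (hα : 0 ≤ α) (hβ : 0 ≤ β) (hu : ContDiff ℝ 2 u)
    (hu₀ : ∀ p ∈ StadiumBoundary α β, u p = 0) :
    ∫ p in Stadium α β, gradSq u p = ∫ p in Stadium α β, u p * lap u p := by
  have hu₁ : ContDiff ℝ 1 u := hu.of_le one_le_two
  have hx : ContDiff ℝ 1 (pdx u) := contDiff_pdx hu (by norm_num)
  have hy : ContDiff ℝ 1 (pdy u) := contDiff_pdy hu (by norm_num)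
  have hcont : Continuous fun p => u p * lap u p := hu.continuous.mul (continuous_lap hu)
  have hdiv (p : ℝ × ℝ) : pdx (fun q => u q * pdx u q) p + pdy (fun q => u q * pdy u q) p =
      gradSq u p - u p * lap u p := by
    have hP := (hasDerivAt_pdx (hu₁.differentiable one_ne_zero) p.1 p.2).fun_mul
      (hasDerivAt_pdx (hx.differentiable one_ne_zero) p.1 p.2)
    have hQ := (hasDerivAt_pdy (hu₁.differentiable one_ne_zero) p.1 p.2).fun_mul
      (hasDerivAt_pdy (hy.differentiable one_ne_zero) p.1 p.2)
    rw [pdx, hP.deriv, pdy, hQ.deriv, gradSq, lap]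
    ring
  have hzero := integral_div_stadium_eq_zero hα hβ (hu₁.mul hx) (hu₁.mul hy)
    (fun p hp => by rw [hu₀ p hp, zero_mul]) (fun p hp => by rw [hu₀ p hp, zero_mul])
  simp only [hdiv] at hzero
  rwa [integral_sub (integrableOn_stadium hα hβ (continuous_gradSq hu₁))
    (integrableOn_stadium hα hβ hcont), sub_eq_zero] at hzero

lemma integral_mul_dilationDeriv (hα : 0 ≤ α) (hβ : 0 ≤ β) (hu : ContDiff ℝ 1 u)
    (hu₀ : ∀ p ∈ StadiumBoundary α β, u p = 0) :
    ∫ p in Stadium α β, u p * dilationDeriv u p = -∫ p in Stadium α β, u p ^ 2 := by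
  have hsq : Continuous fun p => u p ^ 2 := hu.continuous.pow 2
  have hmul : Continuous fun p => u p * dilationDeriv u p :=
    hu.continuous.mul (continuous_dilationDeriv hu)
  have hdiv (p : ℝ × ℝ) : pdx (fun q => q.1 * u q ^ 2) p + pdy (fun q => q.2 * u q ^ 2) p =
      2 * (u p * dilationDeriv u p + u p ^ 2) := by
    have hP := (hasDerivAt_id' p.1).fun_mul
      ((hasDerivAt_pdx (hu.differentiable one_ne_zero) p.1 p.2).fun_pow 2)
    have hQ := (hasDerivAt_id' p.2).fun_mul
      ((hasDerivAt_pdy (hu.differentiable one_ne_zero) p.1 p.2).fun_pow 2)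
    rw [pdx, hP.deriv, pdy, hQ.deriv, dilationDeriv]
    push_cast
    ring
  have hzero := integral_div_stadium_eq_zero hα hβ
    (P := fun q => q.1 * u q ^ 2) (Q := fun q => q.2 * u q ^ 2) (by fun_prop) (by fun_prop)
    (fun p hp => by simp [hu₀ p hp]) (fun p hp => by simp [hu₀ p hp])
  simp only [hdiv] at hzero
  rw [integral_const_mul, integral_add
    (integrableOn_stadium hα hβ hmul) (integrableOn_stadium hα hβ hsq)] at hzero
  linarith

/-- The first component of Rellich's vector field `(x ∂ₓu + y ∂_y u) ∇u - |∇u|² (x, y) / 2`. -/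
def rellichFieldX (u : ℝ × ℝ → ℝ) (p : ℝ × ℝ) : ℝ :=
  p.1 * (pdx u p ^ 2 - pdy u p ^ 2) / 2 + p.2 * (pdx u p * pdy u p)

/-- The second component of Rellich's vector field `(x ∂ₓu + y ∂_y u) ∇u - |∇u|² (x, y) / 2`. -/
def rellichFieldY (u : ℝ × ℝ → ℝ) (p : ℝ × ℝ) : ℝ :=
  p.1 * (pdx u p * pdy u p) + p.2 * (pdy u p ^ 2 - pdx u p ^ 2) / 2

lemma div_rellichField (hu : ContDiff ℝ 2 u) (p : ℝ × ℝ) :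
    pdx (rellichFieldX u) p + pdy (rellichFieldY u) p = -(dilationDeriv u p * lap u p) := by
  have hx : Differentiable ℝ (pdx u) :=
    (contDiff_pdx (m := 1) hu (by norm_num)).differentiable one_ne_zero
  have hy : Differentiable ℝ (pdy u) :=
    (contDiff_pdy (m := 1) hu (by norm_num)).differentiable one_ne_zero
  have hxx := hasDerivAt_pdx hx p.1 p.2
  have hyx := hasDerivAt_pdx hy p.1 p.2
  have hxy := hasDerivAt_pdy hx p.1 p.2
  have hyy := hasDerivAt_pdy hy p.1 p.2
  rw [pdy_pdx_comm hu] at hxy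
  have hX := (((hasDerivAt_id' p.1).fun_mul ((hxx.fun_pow 2).fun_sub (hyx.fun_pow 2))).div_const
    2).fun_add ((hxx.fun_mul hyx).const_mul p.2)
  have hY := ((hxy.fun_mul hyy).const_mul p.1).fun_add
    (((hasDerivAt_id' p.2).fun_mul ((hyy.fun_pow 2).fun_sub (hxy.fun_pow 2))).div_const 2)
  rw [pdx, pdy, show deriv (fun t => rellichFieldX u (t, p.2)) p.1 = _ from hX.deriv,
    show deriv (fun t => rellichFieldY u (p.1, t)) p.2 = _ from hY.deriv, dilationDeriv, lap]
  push_cast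
  ring

theorem rellich_identity (hα : 0 ≤ α) (hβ : 0 < β) (hu : ContDiff ℝ 2 u)
    (hu₀ : ∀ p ∈ StadiumBoundary α β, u p = 0) :
    bdryInt α β (fun p n => (p.1 * n.1 + p.2 * n.2) * nderiv u p n ^ 2) =
      -2 * ∫ p in Stadium α β, dilationDeriv u p * lap u p := by
  have hx : ContDiff ℝ 1 (pdx u) := contDiff_pdx hu (by norm_num)
  have hy : ContDiff ℝ 1 (pdy u) := contDiff_pdy hu (by norm_num)
  have hX : ContDiff ℝ 1 (rellichFieldX u) := by unfold rellichFieldX; fun_prop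
  have hY : ContDiff ℝ 1 (rellichFieldY u) := by unfold rellichFieldY; fun_prop
  have hgauss := integral_div_stadium hα hβ.le hX hY
  simp only [div_rellichField hu, integral_neg] at hgauss
  have hflux : bdryInt α β (fun p n => (p.1 * n.1 + p.2 * n.2) * nderiv u p n ^ 2) =
      bdryInt α β (fun p n => 2 * (n.1 * rellichFieldX u p + n.2 * rellichFieldY u p)) := by
    refine bdryInt_congr hα fun p n hpn => ?_
    obtain ⟨hpx, hpy⟩ :=
      grad_eq_nderiv_mul_normal hα hβ (hu.differentiable two_ne_zero) hu₀ hpn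
    rw [rellichFieldX, rellichFieldY, hpx, hpy]
    linear_combination (-(p.1 * n.1 + p.2 * n.2) * nderiv u p n ^ 2) * hpn.sq_add_sq_eq_one
  rw [hflux, bdryInt_const_mul, ← hgauss]
  ring

end RellichIdentities

section QuasimodeEstimates

lemma two_mul_integral_mul_le {X : Type*} [MeasurableSpace X] {ν : Measure X} {g h : X → ℝ}
    (hg : MemLp g 2 ν) (hh : MemLp h 2 ν) (c : ℝ) :
    2 * (c * ∫ x, g x * h x ∂ν) ≤ c ^ 2 * ∫ x, g x ^ 2 ∂ν + ∫ x, h x ^ 2 ∂ν := by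
  have hgh : Integrable (fun x => g x * h x) ν := hg.integrable_mul hh
  rw [← integral_const_mul, ← integral_const_mul, ← integral_const_mul,
    ← integral_add (hg.integrable_sq.const_mul _) hh.integrable_sq]
  refine integral_mono ((hgh.const_mul c).const_mul 2)
    ((hg.integrable_sq.const_mul _).add hh.integrable_sq) fun x => ?_
  linarith [sq_nonneg (c * g x - h x)]

variable {α β : ℝ} {u : ℝ × ℝ → ℝ}

lemma memLp_two_stadium (hα : 0 ≤ α) (hβ : 0 ≤ β) {f : ℝ × ℝ → ℝ} (hf : Continuous f) :
    MemLp f 2 (volume.restrict (Stadium α β)) :=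
  (memLp_two_iff_integrable_sq hf.aestronglyMeasurable).2
    (integrableOn_stadium hα hβ (hf.pow 2))

lemma integral_dilationDeriv_sq_le (hα : 0 ≤ α) (hβ : 0 ≤ β) (hu : ContDiff ℝ 1 u) :
    ∫ p in Stadium α β, dilationDeriv u p ^ 2 ≤ (α + β) ^ 2 * ∫ p in Stadium α β, gradSq u p := by
  rw [← integral_const_mul]
  refine setIntegral_mono_on (integrableOn_stadium hα hβ ((continuous_dilationDeriv hu).pow 2))
    ((integrableOn_stadium hα hβ (continuous_gradSq hu)).const_mul _)
    (isClosed_stadium hα hβ).measurableSet fun p hp => ?_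
  have hgrad : 0 ≤ gradSq u p := add_nonneg (sq_nonneg _) (sq_nonneg _)
  exact (dilationDeriv_sq_le u p).trans
    (mul_le_mul_of_nonneg_right (sq_add_sq_le_of_mem_stadium hα hβ hp) hgrad)

theorem integral_sq_le_mul_integral_gradSq (hα : 0 ≤ α) (hβ : 0 ≤ β) (hu : ContDiff ℝ 1 u)
    (hu₀ : ∀ p ∈ StadiumBoundary α β, u p = 0) :
    ∫ p in Stadium α β, u p ^ 2 ≤ (α + β) ^ 2 * ∫ p in Stadium α β, gradSq u p := by
  have hyoung := two_mul_integral_mul_le (memLp_two_stadium hα hβ hu.continuous)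
    (memLp_two_stadium hα hβ (continuous_dilationDeriv hu)) (-1)
  rw [integral_mul_dilationDeriv hα hβ hu hu₀] at hyoung
  linarith [integral_dilationDeriv_sq_le hα hβ hu]

lemma integral_mul_lap (hα : 0 ≤ α) (hβ : 0 ≤ β) (hu : ContDiff ℝ 2 u) {w : ℝ × ℝ → ℝ}
    (hw : Continuous w) (μ : ℝ) :
    ∫ p in Stadium α β, w p * lap u p = μ * (∫ p in Stadium α β, u p * w p) +
      ∫ p in Stadium α β, (lap u p - μ * u p) * w p := by
  have hlap := continuous_lap hu
  have huw : Continuous fun p => u p * w p := hu.continuous.mul hw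
  have hfw : Continuous fun p => (lap u p - μ * u p) * w p := by fun_prop
  rw [← integral_const_mul, ← integral_add
    ((integrableOn_stadium hα hβ huw).const_mul μ) (integrableOn_stadium hα hβ hfw)]
  congr 1 with p
  ring

theorem integral_gradSq_le (hα : 0 ≤ α) (hβ : 0 < β) (hu : ContDiff ℝ 2 u)
    (hu₀ : ∀ p ∈ StadiumBoundary α β, u p = 0) (μ : ℝ) :
    ∫ p in Stadium α β, gradSq u p ≤ 2 * μ * (∫ p in Stadium α β, u p ^ 2) +
      (α + β) ^ 2 * ∫ p in Stadium α β, (lap u p - μ * u p) ^ 2 := by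
  have hlap := continuous_lap hu
  have henergy := integral_gradSq_eq_integral_mul_lap hα hβ.le hu hu₀
  rw [integral_mul_lap hα hβ.le hu hu.continuous μ] at henergy
  simp only [← sq] at henergy
  have hyoung := two_mul_integral_mul_le
    (memLp_two_stadium hα hβ.le (f := fun p => lap u p - μ * u p) (by fun_prop))
    (memLp_two_stadium hα hβ.le hu.continuous) ((α + β) ^ 2)
  have hpoincare := integral_sq_le_mul_integral_gradSq hα hβ.le (hu.of_le one_le_two) hu₀
  refine le_of_mul_le_mul_left ?_ (by positivity : 0 < (α + β) ^ 2)
  linear_combination 2 * (α + β) ^ 2 * henergy + hyoung + hpoincare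

theorem mul_bdryInt_nderiv_sq_le (hα : 0 ≤ α) (hβ : 0 < β) (hu : ContDiff ℝ 2 u)
    (hu₀ : ∀ p ∈ StadiumBoundary α β, u p = 0) (μ : ℝ) :
    β * bdryInt α β (fun p n => nderiv u p n ^ 2) ≤ 2 * μ * (∫ p in Stadium α β, u p ^ 2) +
      (∫ p in Stadium α β, (lap u p - μ * u p) ^ 2) +
      (α + β) ^ 2 * ∫ p in Stadium α β, gradSq u p := by
  have hu₁ : ContDiff ℝ 1 u := hu.of_le one_le_two
  have hlap := continuous_lap hu
  have hnderiv := continuous_nderiv hu₁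
  have hstar : β * bdryInt α β (fun p n => nderiv u p n ^ 2) ≤
      bdryInt α β (fun p n => (p.1 * n.1 + p.2 * n.2) * nderiv u p n ^ 2) := by
    rw [← bdryInt_const_mul]
    unfold Function.uncurry at hnderiv
    exact bdryInt_mono hα hβ.le (by unfold Function.uncurry; fun_prop)
      (by unfold Function.uncurry; fun_prop)
      fun p n hpn => mul_le_mul_of_nonneg_right (hpn.le_position_inner hα) (sq_nonneg _)
  rw [rellich_identity hα hβ hu hu₀, integral_mul_lap hα hβ.le hu (continuous_dilationDeriv hu₁) μ,
    integral_mul_dilationDeriv hα hβ.le hu₁ hu₀] at hstar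
  have hyoung := two_mul_integral_mul_le
    (memLp_two_stadium hα hβ.le (f := fun p => lap u p - μ * u p) (by fun_prop))
    (memLp_two_stadium hα hβ.le (continuous_dilationDeriv hu₁)) (-1)
  linarith [integral_dilationDeriv_sq_le hα hβ.le hu₁]

theorem bdryInt_nderiv_sq_le (hα : 0 ≤ α) (hβ : 0 < β) (hu : ContDiff ℝ 2 u)
    (hu₀ : ∀ p ∈ StadiumBoundary α β, u p = 0) {μ : ℝ} (hμ : 0 ≤ μ) :
    bdryInt α β (fun p n => nderiv u p n ^ 2) ≤ (2 + 2 * (α + β) ^ 2 + (α + β) ^ 4) / β *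
      (μ * (∫ p in Stadium α β, u p ^ 2) + ∫ p in Stadium α β, (lap u p - μ * u p) ^ 2) := by
  set N := ∫ p in Stadium α β, u p ^ 2
  set F := ∫ p in Stadium α β, (lap u p - μ * u p) ^ 2
  have hN : 0 ≤ N := integral_nonneg fun p => sq_nonneg _
  have hF : 0 ≤ F := integral_nonneg fun p => sq_nonneg _
  rw [div_mul_eq_mul_div, le_div_iff₀' hβ]
  calc β * bdryInt α β (fun p n => nderiv u p n ^ 2)
      ≤ 2 * μ * N + F + (α + β) ^ 2 * ∫ p in Stadium α β, gradSq u p :=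
        mul_bdryInt_nderiv_sq_le hα hβ hu hu₀ μ
    _ ≤ 2 * μ * N + F + (α + β) ^ 2 * (2 * μ * N + (α + β) ^ 2 * F) := by
        gcongr
        exact integral_gradSq_le hα hβ hu hu₀ μ
    _ = (2 + 2 * (α + β) ^ 2 + (α + β) ^ 4) * (μ * N + F) -
        ((α + β) ^ 4 * (μ * N) + (1 + 2 * (α + β) ^ 2) * F) := by ring
    _ ≤ (2 + 2 * (α + β) ^ 2 + (α + β) ^ 4) * (μ * N + F) :=
        sub_le_self _ (add_nonneg (mul_nonneg (by positivity) (mul_nonneg hμ hN))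
          (mul_nonneg (by positivity) hF))

end QuasimodeEstimates

theorem stmt13_general {α β : ℝ} (hα : 0 ≤ α) (hβ : 0 < β) :
    ∃ C > 0, ∀ (u f : ℝ × ℝ → ℝ) (lam : ℝ) (V : Set (ℝ × ℝ)), IsOpen V → Stadium α β ⊆ V →
      ContDiffOn ℝ 2 u V → (∀ p ∈ StadiumBoundary α β, u p = 0) →
      (∀ p ∈ Stadium α β, lap u p - lam ^ 2 * u p = f p) →
      bdryInt α β (fun p n => nderiv u p n ^ 2) ≤
        C * (lam ^ 2 * (∫ p in Stadium α β, u p ^ 2) + ∫ p in Stadium α β, f p ^ 2) := by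
  refine ⟨(2 + 2 * (α + β) ^ 2 + (α + β) ^ 4) / β, by positivity,
    fun u f lam V hV hSV hu hu₀ hf => ?_⟩
  obtain ⟨v, hv, huv⟩ :=
    exists_contDiff_eventuallyEq (n := 2) (isClosed_stadium hα hβ.le) hV hSV hu
  have hmeas : MeasurableSet (Stadium α β) := (isClosed_stadium hα hβ.le).measurableSet
  have hsub := stadiumBoundary_subset_stadium hα hβ.le
  have hv₀ : ∀ p ∈ StadiumBoundary α β, v p = 0 := fun p hp => by
    rw [← (huv p (hsub hp)).eq_of_nhds, hu₀ p hp]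
  have hflux : bdryInt α β (fun p n => nderiv u p n ^ 2) =
      bdryInt α β (fun p n => nderiv v p n ^ 2) := bdryInt_congr hα fun p n hpn => by
    rw [nderiv_congr (huv p (hsub (hpn.mem_stadiumBoundary hα hβ.le)))]
  have hmass : ∫ p in Stadium α β, u p ^ 2 = ∫ p in Stadium α β, v p ^ 2 :=
    setIntegral_congr_fun hmeas fun p hp => by simp only [(huv p hp).eq_of_nhds]
  have hsource : ∫ p in Stadium α β, f p ^ 2 =
      ∫ p in Stadium α β, (lap v p - lam ^ 2 * v p) ^ 2 :=
    setIntegral_congr_fun hmeas fun p hp => by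
      simp only [← hf p hp, lap_congr (huv p hp), (huv p hp).eq_of_nhds]
  rw [hflux, hmass, hsource]
  exact bdryInt_nderiv_sq_le hα hβ hv hv₀ (sq_nonneg lam)

/-- there are `C > 0` and `λ₀ > 0` depending only on `α, β` such that every
real Dirichlet quasimode datum with `λ ≥ λ₀` satisfies
`∫_{∂S} |∂_N u|² dl ≤ C (λ² ‖u‖²_{L²(S)} + ‖f‖²_{L²(S)})`. -/
theorem stmt13 (α β : ℝ) (hα : 0 < α) (hβ : 0 < β) :
    ∃ C > 0, ∃ lam₀ > 0, ∀ d : QMDatum α β, d.lam ≥ lam₀ →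
      bdryInt α β (fun p n => (nderiv d.u p n) ^ 2) ≤
        C * (d.lam ^ 2 * (∫ p in Stadium α β, (d.u p) ^ 2) +
             (∫ p in Stadium α β, (d.f p) ^ 2)) := by
  obtain ⟨C, hC, hbound⟩ := stmt13_general hα.le hβ
  refine ⟨C, hC, 1, one_pos, fun ⟨u, lam, f, _, ⟨V, hV, hSV, hu⟩, hu₀, hf⟩ _ => ?_⟩
  exact hbound u f lam V hV hSV (hu.of_le (WithTop.coe_le_coe.2 le_top)) hu₀ hf
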